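/- Let χ_a^k, χ_b^k : Ω → {0,1} be measurable with χ_a^k + χ_b^k = 1 a.e. in Ω, set ψ^k := χ_b^k − χ_a^k, and assume ψ^k → ψ weak* in L^∞(Ω). Let E^k → E and p^k → p weakly in L²(Ω; Sym(n)), and assume p^k = (χ_a^k a + χ_b^k b) E^k + A⁺ + ψ^k A⁻ a.e. in Ω for every k. For fields F, q ∈ L²(Ω; Sym(n)) and a measurable t : Ω → ℝ define, on Ω ∖ Ω₀, G(F, q, t) := (ab(C−D)/(b−a))·F + ((bD−aC)/(b−a))·q + ab(|C|²−|D|²)/(2(b−a)) − t · ab|C−D|²/(2(b−a)). Then G(E^k, p^k, ψ^k) is integrable on Ω ∖ Ω₀ for each k, G(E, p, ψ) is integrable on Ω ∖ Ω₀, and ∫_{Ω∖Ω₀} G(E^k, p^k, ψ^k) dx → ∫_{Ω∖Ω₀} G(E, p, ψ) dx as k → ∞. -/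

import Mathlib

open MeasureTheory Filter Topology

noncomputable section

abbrev RV (n : ℕ) := Fin n → ℝ
abbrev Mat (n : ℕ) := Matrix (Fin n) (Fin n) ℝ
abbrev MField (n : ℕ) := RV n → Mat n
abbrev VField (n : ℕ) := RV n → RV n

/-- Frobenius inner product of matrices: `P·Q = ∑ᵢⱼ Pᵢⱼ Qᵢⱼ`. -/
def mdot {n : ℕ} (P Q : Mat n) : ℝ := ∑ i, ∑ j, P i j * Q i j

/-- A matrix field takes symmetric values a.e. on `s`. -/
def SymOn {n : ℕ} (E : MField n) (s : Set (RV n)) : Prop :=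
  ∀ᵐ x ∂(volume : Measure (RV n)), x ∈ s → ∀ i j, E x i j = E x j i

/-- Matrix field in L² on `s`: componentwise measurable and `|E|²` integrable on `s`. -/
def L2MOn {n : ℕ} (E : MField n) (s : Set (RV n)) : Prop :=
  (∀ i j, Measurable fun x => E x i j) ∧
    IntegrableOn (fun x => mdot (E x) (E x)) s volume

/-- Vector field in L² on `s`. -/
def L2VOn {n : ℕ} (u : VField n) (s : Set (RV n)) : Prop :=
  (∀ i, Measurable fun x => u x i) ∧
    IntegrableOn (fun x => ∑ i, u x i * u x i) s volume

/-- Scalar function in L∞ on `s`. -/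
def LinfROn {n : ℕ} (f : RV n → ℝ) (s : Set (RV n)) : Prop :=
  Measurable f ∧ ∃ M : ℝ, ∀ᵐ x ∂(volume : Measure (RV n)), x ∈ s → |f x| ≤ M

/-- Matrix field in L∞ on `s`. -/
def LinfMOn {n : ℕ} (F : MField n) (s : Set (RV n)) : Prop :=
  (∀ i j, Measurable fun x => F x i j) ∧
    ∃ M : ℝ, ∀ᵐ x ∂(volume : Measure (RV n)), x ∈ s → ∀ i j, |F x i j| ≤ M

/-- `E` is the weak symmetrized gradient of `u`:
for all `i j` and every test function `φ ∈ C_c^∞(ℝⁿ)`,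
`∫ Eᵢⱼ φ = -(1/2) ∫ (uᵢ ∂ⱼφ + uⱼ ∂ᵢφ)`. -/
def IsSymGrad {n : ℕ} (u : VField n) (E : MField n) : Prop :=
  ∀ i j, ∀ φ : RV n → ℝ, ContDiff ℝ (⊤ : ℕ∞) φ → HasCompactSupport φ →
    ∫ x, E x i j * φ x =
      -(1 / 2) * ∫ x, (u x i * fderiv ℝ φ x (Pi.single j 1) +
        u x j * fderiv ℝ φ x (Pi.single i 1))

/-- Admissible pair: the encoding of `v ∈ H¹₀(Ω;ℝⁿ)` together with its symmetrized
gradient `ε(v)`. -/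
structure AdmPair (n : ℕ) (Ω : Set (RV n)) where
  u : VField n
  E : MField n
  hu : L2VOn u Set.univ
  hE : L2MOn E Set.univ
  hsym : SymOn E Set.univ
  huz : ∀ᵐ x ∂(volume : Measure (RV n)), x ∉ Ω → u x = 0
  hEz : ∀ᵐ x ∂(volume : Measure (RV n)), x ∉ Ω → E x = 0
  hgrad : IsSymGrad u E

/-- Weak convergence in `L²(s; Sym(n))`. -/
def WeakL2M {n : ℕ} (Ek : ℕ → MField n) (E : MField n) (s : Set (RV n)) : Prop :=
  ∀ G : MField n, L2MOn G s →
    Tendsto (fun k => ∫ x in s, mdot (Ek k x) (G x)) atTop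
      (𝓝 (∫ x in s, mdot (E x) (G x)))

/-- Weak convergence in `L²(s; ℝⁿ)`. -/
def WeakL2V {n : ℕ} (uk : ℕ → VField n) (u : VField n) (s : Set (RV n)) : Prop :=
  ∀ g : VField n, L2VOn g s →
    Tendsto (fun k => ∫ x in s, ∑ i, uk k x i * g x i) atTop
      (𝓝 (∫ x in s, ∑ i, u x i * g x i))

/-- Weak* convergence in `L∞(s)`. -/
def WeakStarLinf {n : ℕ} (fk : ℕ → RV n → ℝ) (f : RV n → ℝ) (s : Set (RV n)) : Prop :=
  ∀ h : RV n → ℝ, IntegrableOn h s volume →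
    Tendsto (fun k => ∫ x in s, fk k x * h x) atTop (𝓝 (∫ x in s, f x * h x))

/-- Weak convergence in `L¹(s)`. -/
def WeakL1 {n : ℕ} (fk : ℕ → RV n → ℝ) (f : RV n → ℝ) (s : Set (RV n)) : Prop :=
  ∀ g : RV n → ℝ, Measurable g →
    (∃ M : ℝ, ∀ᵐ x ∂(volume : Measure (RV n)), x ∈ s → |g x| ≤ M) →
    Tendsto (fun k => ∫ x in s, fk k x * g x) atTop (𝓝 (∫ x in s, f x * g x))

/-- Uniform integrability of a family on `s`. -/
def UnifIntOn {n : ℕ} (fk : ℕ → RV n → ℝ) (s : Set (RV n)) : Prop :=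
  ∀ ε : ℝ, 0 < ε → ∃ η : ℝ, 0 < η ∧ ∀ A : Set (RV n), MeasurableSet A → A ⊆ s →
    volume A < ENNReal.ofReal η → ∀ k, ∫ x in A, |fk k x| < ε

/-- The double-well integrand `min{½a|F+C|², ½b|F+D|²}`. -/
def phaseMin {n : ℕ} (a b : RV n → ℝ) (C D : MField n) (F : MField n) (x : RV n) : ℝ :=
  min (1 / 2 * a x * mdot (F x + C x) (F x + C x))
      (1 / 2 * b x * mdot (F x + D x) (F x + D x))

/-- The nonconvex energy. -/
def Jfun {n : ℕ} (Ω : Set (RV n)) (a b : RV n → ℝ) (C D : MField n) (F : MField n) : ℝ :=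
  ∫ x in Ω, phaseMin a b C D F x

/-- The infimum `α` of the nonconvex problem over admissible pairs. -/
def alphaInf {n : ℕ} (Ω : Set (RV n)) (a b : RV n → ℝ) (C D : MField n) : ℝ :=
  sInf { r : ℝ | ∃ P : AdmPair n Ω, r = Jfun Ω a b C D P.E }

/-- The convexified energy `∫ [½χₐa|F+C|² + ½χᵦb|F+D|²]`. -/
def Jconv {n : ℕ} (Ω : Set (RV n)) (χa χb a b : RV n → ℝ) (C D : MField n)
    (F : MField n) : ℝ :=
  ∫ x in Ω, (1 / 2 * χa x * a x * mdot (F x + C x) (F x + C x)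
    + 1 / 2 * χb x * b x * mdot (F x + D x) (F x + D x))

/-- `A⁺ = (aC + bD)/2`. -/
def Aplus {n : ℕ} (a b : RV n → ℝ) (C D : MField n) : MField n :=
  fun x => (2 : ℝ)⁻¹ • (a x • C x + b x • D x)

/-- `A⁻ = (bD − aC)/2`. -/
def Aminus {n : ℕ} (a b : RV n → ℝ) (C D : MField n) : MField n :=
  fun x => (2 : ℝ)⁻¹ • (b x • D x - a x • C x)

/-- The integrand on `Ω \ Ω₀`:
`(ab(C−D)/(b−a))·F + ((bD−aC)/(b−a))·q + ab(|C|²−|D|²)/(2(b−a)) − t·ab|C−D|²/(2(b−a))`. -/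
def Goff {n : ℕ} (a b : RV n → ℝ) (C D : MField n) (F q : MField n) (t : RV n → ℝ)
    (x : RV n) : ℝ :=
  a x * b x / (b x - a x) * mdot (C x - D x) (F x) +
    (b x - a x)⁻¹ * mdot (b x • D x - a x • C x) (q x) +
    a x * b x * (mdot (C x) (C x) - mdot (D x) (D x)) / (2 * (b x - a x)) -
    t x * (a x * b x * mdot (C x - D x) (C x - D x) / (2 * (b x - a x)))

/-- `Ω₀ = {x ∈ Ω : a(x) = b(x)}`. -/
def Omega0 {n : ℕ} (Ω : Set (RV n)) (a b : RV n → ℝ) : Set (RV n) :=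
  {x ∈ Ω | a x = b x}

/-!
In each phase the singular factor `1/(b − a)` cancels: the integrand equals `C·pᵏ` where `χ_aᵏ = 1`
and `D·pᵏ` where `χ_bᵏ = 1`. Hence it is dominated by `M|pᵏ|`, which is bounded in `L²` because
`pᵏ` converges weakly, so the integrands are uniformly integrable on `Ω ∖ Ω₀`. On the sets
`{|b − a| ≥ ε}` all coefficients are bounded and every term converges weakly in `L¹`. Testing
this convergence with the sign of the limit bounds its `L¹` norm independently of `ε`, which gives
the integrability of the limit; uniform integrability then permits exchanging `k → ∞` and `ε → 0`.
-/

section UniformIntegrability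

variable {α ι κ : Type*} [MeasurableSpace α] {μ : Measure α}

lemma one_div_one_sub_one_div_toReal_pos {p : ENNReal} (hp : 1 < p) :
    0 < 1 / ENNReal.toReal 1 - 1 / p.toReal := by
  rcases eq_or_ne p ⊤ with rfl | hp_top
  · simp
  · have : 1 < p.toReal := by simpa using (ENNReal.toReal_lt_toReal (by simp) hp_top).2 hp
    simpa using inv_lt_one_of_one_lt₀ this

lemma unifIntegrable_one_of_eLpNorm_le {E : Type*} [NormedAddCommGroup E] {f : ι → α → E}
    {p : ENNReal} {C : NNReal} (hp : 1 < p) (hf : ∀ i, AEStronglyMeasurable (f i) μ)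
    (hC : ∀ i, eLpNorm (f i) p μ ≤ C) : UnifIntegrable f 1 μ := by
  intro ε hε
  set r : ℝ := 1 / ENNReal.toReal 1 - 1 / p.toReal
  have r_pos : 0 < r := one_div_one_sub_one_div_toReal_pos hp
  have small : Tendsto (fun δ : ℝ => C * ENNReal.ofReal δ ^ r) (𝓝[>] 0) (𝓝 0) := by
    have h : Tendsto (fun δ : ℝ => ENNReal.ofReal δ ^ r) (𝓝 0) (𝓝 (ENNReal.ofReal 0 ^ r)) :=
      ((ENNReal.continuous_rpow_const (y := r)).comp ENNReal.continuous_ofReal).tendsto 0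
    simpa [ENNReal.zero_rpow_of_pos r_pos] using
      (ENNReal.Tendsto.const_mul h (.inr ENNReal.coe_ne_top)).mono_left nhdsWithin_le_nhds
  obtain ⟨δ, hδε, hδ⟩ := ((small.eventually_le_const (ENNReal.ofReal_pos.2 hε)).and
    self_mem_nhdsWithin).exists
  refine ⟨δ, hδ, fun i s hs hμs => ?_⟩
  calc eLpNorm (s.indicator (f i)) 1 μ = eLpNorm (f i) 1 (μ.restrict s) :=
        eLpNorm_indicator_eq_eLpNorm_restrict hs
    _ ≤ eLpNorm (f i) p (μ.restrict s) * μ.restrict s Set.univ ^ r :=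
        eLpNorm_le_eLpNorm_mul_rpow_measure_univ hp.le (hf i).restrict
    _ ≤ C * ENNReal.ofReal δ ^ r := by
        rw [Measure.restrict_apply_univ]
        gcongr
        exact (eLpNorm_mono_measure _ Measure.restrict_le_self).trans (hC i)
    _ ≤ ENNReal.ofReal ε := hδε

lemma uniformIntegrable_one_of_eLpNorm_le [IsFiniteMeasure μ] {E : Type*} [NormedAddCommGroup E]
    {f : ι → α → E} {p : ENNReal} {C : NNReal} (hp : 1 < p)
    (hf : ∀ i, AEStronglyMeasurable (f i) μ) (hC : ∀ i, eLpNorm (f i) p μ ≤ C) :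
    UniformIntegrable f 1 μ := by
  refine ⟨hf, unifIntegrable_one_of_eLpNorm_le hp hf hC,
    (C * μ Set.univ ^ (1 / ENNReal.toReal 1 - 1 / p.toReal)).toNNReal, fun i => ?_⟩
  rw [ENNReal.coe_toNNReal]
  · exact (eLpNorm_le_eLpNorm_mul_rpow_measure_univ hp.le (hf i)).trans (by gcongr; exact hC i)
  · refine ENNReal.mul_ne_top ENNReal.coe_ne_top
      (ENNReal.rpow_ne_top_of_nonneg (one_div_one_sub_one_div_toReal_pos hp).le
        (measure_ne_top μ _))

lemma tendsto_measure_compl_of_aecover [IsFiniteMeasure μ] {l : Filter κ}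
    [l.IsCountablyGenerated] {V : κ → Set α} (hV : AECover μ l V) :
    Tendsto (fun m => μ (V m)ᶜ) l (𝓝 0) := by
  rw [← measure_empty (μ := μ)]
  refine tendsto_measure_of_ae_tendsto_indicator_of_isFiniteMeasure l MeasurableSet.empty
    (fun m => (hV.measurableSet m).compl) ?_
  filter_upwards [hV.ae_eventually_mem] with x hx
  filter_upwards [hx] with m hm
  simp [hm]

lemma tendstoUniformly_setIntegral_of_aecover [IsFiniteMeasure μ] {l : Filter κ}
    [l.IsCountablyGenerated] {E : Type*} [NormedAddCommGroup E] [NormedSpace ℝ E]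
    {V : κ → Set α} (hV : AECover μ l V) {f : ι → α → E} (hf : UniformIntegrable f 1 μ) :
    TendstoUniformly (fun m i => ∫ x in V m, f i x ∂μ) (fun i => ∫ x, f i x ∂μ) l := by
  rw [Metric.tendstoUniformly_iff]
  intro ε hε
  obtain ⟨δ, hδ, hfδ⟩ := hf.unifIntegrable (half_pos hε)
  filter_upwards [(tendsto_measure_compl_of_aecover hV).eventually_le_const
    (ENNReal.ofReal_pos.2 hδ)] with m hm i
  have hVm := hV.measurableSet m
  have tail : ‖∫ x in (V m)ᶜ, f i x ∂μ‖ₑ ≤ ENNReal.ofReal (ε / 2) :=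
    calc ‖∫ x in (V m)ᶜ, f i x ∂μ‖ₑ ≤ ∫⁻ x in (V m)ᶜ, ‖f i x‖ₑ ∂μ :=
          enorm_integral_le_lintegral_enorm _
      _ = eLpNorm ((V m)ᶜ.indicator (f i)) 1 μ := by
          rw [eLpNorm_indicator_eq_eLpNorm_restrict hVm.compl, eLpNorm_one_eq_lintegral_enorm]
      _ ≤ ENNReal.ofReal (ε / 2) := hfδ i _ hVm.compl hm
  rw [dist_eq_norm, ← integral_add_compl hVm (memLp_one_iff_integrable.1 (hf.memLp i)),
    add_sub_cancel_left]
  rw [← ofReal_norm, ENNReal.ofReal_le_ofReal_iff (half_pos hε).le] at tail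
  exact tail.trans_lt (half_lt_self hε)

lemma tendsto_integral_of_aecover [IsFiniteMeasure μ] {l : Filter κ}
    [l.IsCountablyGenerated] [l.NeBot] {l' : Filter ι} {E : Type*} [NormedAddCommGroup E]
    [NormedSpace ℝ E] {V : κ → Set α} (hV : AECover μ l V) {f : ι → α → E} {g : α → E}
    (hf : UniformIntegrable f 1 μ) (hg : Integrable g μ)
    (hlim : ∀ m, Tendsto (fun i => ∫ x in V m, f i x ∂μ) l' (𝓝 (∫ x in V m, g x ∂μ))) :
    Tendsto (fun i => ∫ x, f i x ∂μ) l' (𝓝 (∫ x, g x ∂μ)) :=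
  (tendstoUniformly_setIntegral_of_aecover hV hf).tendsto_of_eventually_tendsto
    (Eventually.of_forall hlim) (hV.integral_tendsto_of_countably_generated hg)

lemma integral_abs_le_of_tendsto_integral_mul {l : Filter ι} [l.NeBot] {f : ι → α → ℝ}
    {g : α → ℝ} {K : ℝ} (hf : ∀ i, Integrable (f i) μ) (hK : ∀ i, ∫ x, |f i x| ∂μ ≤ K)
    (hg : AEStronglyMeasurable g μ)
    (hlim : ∀ φ : α → ℝ, Measurable φ → (∀ x, |φ x| ≤ 1) →
      Tendsto (fun i => ∫ x, f i x * φ x ∂μ) l (𝓝 (∫ x, g x * φ x ∂μ))) :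
    ∫ x, |g x| ∂μ ≤ K := by
  set φ : α → ℝ := fun x => if 0 ≤ hg.mk g x then 1 else -1 with hφ
  have φ_meas : Measurable φ :=
    Measurable.ite (hg.stronglyMeasurable_mk.measurable measurableSet_Ici) measurable_const
      measurable_const
  have abs_φ : ∀ x, |φ x| ≤ 1 := fun x => by simp only [hφ]; split_ifs <;> simp
  have g_mul_φ : (fun x => g x * φ x) =ᵐ[μ] fun x => |g x| := by
    filter_upwards [hg.ae_eq_mk] with x hx
    simp only [hφ, ← hx]
    split_ifs with h
    · rw [abs_of_nonneg h, mul_one]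
    · rw [abs_of_neg (not_le.1 h), mul_neg_one]
  rw [← integral_congr_ae g_mul_φ]
  refine le_of_tendsto (hlim φ φ_meas abs_φ) (Eventually.of_forall fun i => ?_)
  refine (integral_mono ((hf i).mul_bdd (c := 1) φ_meas.aestronglyMeasurable
    (Eventually.of_forall abs_φ)) (hf i).abs fun x => ?_).trans (hK i)
  calc f i x * φ x ≤ |f i x| * |φ x| := (le_abs_self _).trans (abs_mul _ _).le
    _ ≤ |f i x| := mul_le_of_le_one_right (abs_nonneg _) (abs_φ x)

lemma integrable_of_aecover_of_tendsto_integral_mul {l : Filter κ} [l.IsCountablyGenerated]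
    [l.NeBot] {l' : Filter ι} [l'.NeBot] {V : κ → Set α} (hV : AECover μ l V) {f : ι → α → ℝ}
    {g : α → ℝ} (hf : UniformIntegrable f 1 μ) (hg : ∀ m, IntegrableOn g (V m) μ)
    (hlim : ∀ m, ∀ φ : α → ℝ, Measurable φ → (∀ x, |φ x| ≤ 1) →
      Tendsto (fun i => ∫ x in V m, f i x * φ x ∂μ) l' (𝓝 (∫ x in V m, g x * φ x ∂μ))) :
    Integrable g μ := by
  have hf_int : ∀ i, Integrable (f i) μ := fun i => memLp_one_iff_integrable.1 (hf.memLp i)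
  obtain ⟨K, hK⟩ := hf.2.2
  refine hV.integrable_of_integral_norm_bounded K hg (Eventually.of_forall fun m => ?_)
  refine integral_abs_le_of_tendsto_integral_mul (fun i => (hf_int i).restrict) (fun i => ?_)
    (hg m).aestronglyMeasurable (hlim m)
  calc ∫ x in V m, |f i x| ∂μ ≤ ∫ x, |f i x| ∂μ :=
        setIntegral_le_integral (hf_int i).abs (Eventually.of_forall fun x => abs_nonneg _)
    _ = (eLpNorm (f i) 1 μ).toReal := by
        simp_rw [← Real.norm_eq_abs]
        rw [integral_norm_eq_lintegral_enorm (hf.aestronglyMeasurable i),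
          eLpNorm_one_eq_lintegral_enorm]
    _ ≤ K := ENNReal.toReal_le_coe_of_le_coe (hK i)

end UniformIntegrability

lemma exists_norm_le_of_forall_bddAbove_norm_inner {𝕜 H ι : Type*} [RCLike 𝕜]
    [NormedAddCommGroup H] [InnerProductSpace 𝕜 H] [CompleteSpace H] {x : ι → H}
    (hx : ∀ y, BddAbove (Set.range fun i => ‖inner 𝕜 (x i) y‖)) : ∃ K, ∀ i, ‖x i‖ ≤ K := by
  obtain ⟨K, hK⟩ := banach_steinhaus (g := fun i => innerSL 𝕜 (x i)) fun y =>
    (hx y).imp fun B hB i => hB ⟨i, rfl⟩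
  exact ⟨K, fun i => by simpa using hK i⟩

section Frobenius

variable {n : ℕ}

/-- Matrices as vectors of a Euclidean space, so that `mdot` becomes its inner product and the
Frobenius norm its norm. -/
def matToEuclidean : Mat n ≃ₗ[ℝ] EuclideanSpace ℝ (Fin n × Fin n) :=
  (LinearEquiv.curry ℝ ℝ (Fin n) (Fin n)).symm ≪≫ₗ
    (WithLp.linearEquiv 2 ℝ (Fin n × Fin n → ℝ)).symm

@[simp]
lemma matToEuclidean_apply (P : Mat n) (i j : Fin n) : matToEuclidean P (i, j) = P i j := rfl

lemma mdot_eq_inner (P Q : Mat n) :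
    mdot P Q = inner ℝ (matToEuclidean P) (matToEuclidean Q) := by
  simp only [mdot, PiLp.inner_apply, Fintype.sum_prod_type, matToEuclidean_apply,
    RCLike.inner_apply, conj_trivial, mul_comm]

lemma abs_mdot_le (P Q : Mat n) : |mdot P Q| ≤ ‖matToEuclidean P‖ * ‖matToEuclidean Q‖ :=
  mdot_eq_inner P Q ▸ abs_real_inner_le_norm _ _

lemma norm_matToEuclidean_le {P : Mat n} {M : ℝ} (hP : ∀ i j, |P i j| ≤ M) :
    ‖matToEuclidean P‖ ≤ √(∑ _ : Fin n × Fin n, M ^ 2) := by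
  rw [EuclideanSpace.norm_eq]
  gcongr with ij
  exact hP ij.1 ij.2

end Frobenius

section FunctionSpaces

variable {n : ℕ} {s t : Set (RV n)}

lemma LinfROn.mono {f : RV n → ℝ} (hf : LinfROn f s) (hts : t ⊆ s) : LinfROn f t :=
  ⟨hf.1, hf.2.imp fun _ hM => hM.mono fun _ hx hxt => hx (hts hxt)⟩

lemma LinfMOn.mono {F : MField n} (hF : LinfMOn F s) (hts : t ⊆ s) : LinfMOn F t :=
  ⟨hF.1, hF.2.imp fun _ hM => hM.mono fun _ hx hxt => hx (hts hxt)⟩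

lemma L2MOn.mono {F : MField n} (hF : L2MOn F s) (hts : t ⊆ s) : L2MOn F t :=
  ⟨hF.1, hF.2.mono_set hts⟩

lemma LinfROn.mul {f g : RV n → ℝ} (hf : LinfROn f s) (hg : LinfROn g s) :
    LinfROn (fun x => f x * g x) s := by
  obtain ⟨hf, M, hM⟩ := hf
  obtain ⟨hg, N, hN⟩ := hg
  refine ⟨hf.mul hg, M * N, ?_⟩
  filter_upwards [hM, hN] with x hfx hgx hx
  rw [abs_mul]
  exact mul_le_mul (hfx hx) (hgx hx) (abs_nonneg _) ((abs_nonneg _).trans (hfx hx))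

lemma LinfROn.exists_ae_restrict_le {f : RV n → ℝ} (hf : LinfROn f s) :
    ∃ M, ∀ᵐ x ∂volume.restrict s, ‖f x‖ ≤ M := by
  obtain ⟨hf, M, hM⟩ := hf
  exact ⟨M, (ae_restrict_iff (measurableSet_le hf.norm measurable_const)).2 hM⟩

lemma LinfROn.integrableOn_mul {f h : RV n → ℝ} (hf : LinfROn f s) (hh : IntegrableOn h s) :
    IntegrableOn (fun x => f x * h x) s :=
  let ⟨_, hM⟩ := hf.exists_ae_restrict_le
  Integrable.bdd_mul hh hf.1.aestronglyMeasurable hM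

lemma LinfROn.inv_of_le_abs {f : RV n → ℝ} {c : ℝ} (hf : Measurable f) (hc : 0 < c)
    (hfc : ∀ x ∈ s, c ≤ |f x|) : LinfROn (fun x => (f x)⁻¹) s :=
  ⟨hf.inv, c⁻¹, Eventually.of_forall fun x hx => by rw [abs_inv]; gcongr; exact hfc x hx⟩

lemma LinfMOn.exists_norm_le {F : MField n} (hF : LinfMOn F s) :
    ∃ M, ∀ᵐ x, x ∈ s → ‖matToEuclidean (F x)‖ ≤ M := by
  obtain ⟨-, M, hM⟩ := hF
  exact ⟨_, hM.mono fun x hx hxs => norm_matToEuclidean_le (hx hxs)⟩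

lemma measurable_matToEuclidean {F : MField n} (hF : ∀ i j, Measurable fun x => F x i j) :
    Measurable fun x => matToEuclidean (F x) :=
  (WithLp.measurable_toLp 2 _).comp (measurable_pi_lambda _ fun ij => hF ij.1 ij.2)

lemma l2MOn_iff_memLp {F : MField n} : L2MOn F s ↔ (∀ i j, Measurable fun x => F x i j) ∧
    MemLp (fun x => matToEuclidean (F x)) 2 (volume.restrict s) := by
  refine and_congr_right fun hF => ?_
  rw [memLp_two_iff_integrable_sq_norm (measurable_matToEuclidean hF).aestronglyMeasurable]
  simp only [mdot_eq_inner, real_inner_self_eq_norm_sq, IntegrableOn]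

lemma L2MOn.memLp {F : MField n} (hF : L2MOn F s) :
    MemLp (fun x => matToEuclidean (F x)) 2 (volume.restrict s) :=
  (l2MOn_iff_memLp.1 hF).2

lemma LinfMOn.l2MOn {F : MField n} (hF : LinfMOn F s) (hs : volume s ≠ ⊤) : L2MOn F s := by
  have := Fact.mk hs.lt_top
  obtain ⟨M, hM⟩ := hF.exists_norm_le
  have hFm := measurable_matToEuclidean hF.1
  exact l2MOn_iff_memLp.2 ⟨hF.1, MemLp.of_bound hFm.aestronglyMeasurable M
    ((ae_restrict_iff (measurableSet_le hFm.norm measurable_const)).2 hM)⟩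

lemma L2MOn.sub {F H : MField n} (hF : L2MOn F s) (hH : L2MOn H s) :
    L2MOn (fun x => F x - H x) s :=
  l2MOn_iff_memLp.2 ⟨fun i j => (hF.1 i j).sub (hH.1 i j), by
    simp only [map_sub]
    exact hF.memLp.sub hH.memLp⟩

lemma LinfROn.smul_l2MOn {f : RV n → ℝ} {F : MField n} (hf : LinfROn f s) (hF : L2MOn F s) :
    L2MOn (fun x => f x • F x) s := by
  obtain ⟨M, hM⟩ := hf.exists_ae_restrict_le
  refine l2MOn_iff_memLp.2 ⟨fun i j => hf.1.mul (hF.1 i j), ?_⟩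
  simp only [map_smul]
  refine hF.memLp.of_le_mul (c := M)
    (hf.1.aestronglyMeasurable.smul hF.memLp.aestronglyMeasurable) ?_
  filter_upwards [hM] with x hx
  rw [norm_smul]
  gcongr

lemma L2MOn.integrableOn_mdot {F H : MField n} (hF : L2MOn F s) (hH : L2MOn H s) :
    IntegrableOn (fun x => mdot (F x) (H x)) s := by
  refine (hF.memLp.norm.integrable_mul hH.memLp.norm).mono' ?_
    (Eventually.of_forall fun x => abs_mdot_le (F x) (H x))
  simpa only [mdot_eq_inner] using
    hF.memLp.aestronglyMeasurable.inner hH.memLp.aestronglyMeasurable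

lemma L2MOn.indicator {F : MField n} (hF : L2MOn F t) (ht : MeasurableSet t) :
    L2MOn (t.indicator F) s := by
  refine ⟨fun i j => ?_, ?_⟩
  · have : (fun x => t.indicator F x i j) = t.indicator fun x => F x i j := by
      ext x; by_cases hx : x ∈ t <;> simp [hx]
    exact this ▸ (hF.1 i j).indicator ht
  · have : (fun x => mdot (t.indicator F x) (t.indicator F x)) =
        t.indicator fun x => mdot (F x) (F x) := by
      ext x; by_cases hx : x ∈ t <;> simp [hx, mdot]
    rw [this]
    exact ((integrable_indicator_iff ht).2 hF.2).integrableOn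

end FunctionSpaces

section WeakConvergence

variable {n : ℕ} {s t : Set (RV n)}

lemma WeakL2M.mono {Fk : ℕ → MField n} {F : MField n} (h : WeakL2M Fk F s) (hts : t ⊆ s)
    (ht : MeasurableSet t) : WeakL2M Fk F t := by
  intro G hG
  have extend : ∀ H : MField n,
      ∫ x in s, mdot (H x) (t.indicator G x) = ∫ x in t, mdot (H x) (G x) := by
    intro H
    have : (fun x => mdot (H x) (t.indicator G x)) = t.indicator fun x => mdot (H x) (G x) := by
      ext x; by_cases hx : x ∈ t <;> simp [hx, mdot]
    rw [this, setIntegral_indicator ht, Set.inter_eq_self_of_subset_right hts]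
  simpa only [extend] using h _ (hG.indicator ht)

lemma WeakStarLinf.mono {fk : ℕ → RV n → ℝ} {f : RV n → ℝ} (h : WeakStarLinf fk f s)
    (hts : t ⊆ s) (ht : MeasurableSet t) : WeakStarLinf fk f t := by
  intro g hg
  have extend : ∀ f : RV n → ℝ, ∫ x in s, f x * t.indicator g x = ∫ x in t, f x * g x := by
    intro f
    simp only [← Set.indicator_mul_right]
    rw [setIntegral_indicator ht, Set.inter_eq_self_of_subset_right hts]
  simpa only [extend] using h _ ((integrable_indicator_iff ht).2 hg).integrableOn

lemma WeakL2M.exists_eLpNorm_le {Fk : ℕ → MField n} {F : MField n} (hFk : ∀ k, L2MOn (Fk k) s)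
    (h : WeakL2M Fk F s) : ∃ K : NNReal, ∀ k,
      eLpNorm (fun x => matToEuclidean (Fk k x)) 2 (volume.restrict s) ≤ K := by
  set F₂ := fun k => (hFk k).memLp.toLp
  have bdd : ∀ g, BddAbove (Set.range fun k => ‖inner ℝ (F₂ k) g‖) := by
    intro g
    have g_meas := Lp.aestronglyMeasurable g
    set G : MField n := fun x => matToEuclidean.symm (g_meas.mk g x) with hG
    have G_memLp : L2MOn G s := by
      refine l2MOn_iff_memLp.2 ⟨fun i j => ?_, ?_⟩
      · exact (measurable_pi_apply (i, j)).comp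
          ((WithLp.measurable_ofLp 2 _).comp g_meas.stronglyMeasurable_mk.measurable)
      · simpa only [hG, LinearEquiv.apply_symm_apply] using
          (memLp_congr_ae g_meas.ae_eq_mk).1 (Lp.memLp g)
    have inner_eq : ∀ k, inner ℝ (F₂ k) g = ∫ x in s, mdot (Fk k x) (G x) := by
      intro k
      rw [L2.inner_def]
      refine integral_congr_ae ?_
      filter_upwards [g_meas.ae_eq_mk, (hFk k).memLp.coeFn_toLp] with x hgx hFx
      rw [hFx, hgx, mdot_eq_inner, hG, LinearEquiv.apply_symm_apply]
    simp only [inner_eq]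
    exact (h G G_memLp).norm.bddAbove_range
  obtain ⟨K, hK⟩ := exists_norm_le_of_forall_bddAbove_norm_inner bdd
  refine ⟨K.toNNReal, fun k => ?_⟩
  rw [← Lp.enorm_toLp (hFk k).memLp, ← ofReal_norm]
  exact ENNReal.ofReal_le_ofReal (hK k)

lemma WeakL2M.uniformIntegrable_of_ae_abs_le {Fk : ℕ → MField n} {F : MField n} {M : ℝ}
    (hF : WeakL2M Fk F s) (hFk : ∀ k, L2MOn (Fk k) s) (hs : volume s ≠ ⊤) {f : ℕ → RV n → ℝ}
    (hf : ∀ k, Measurable (f k))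
    (hfF : ∀ k, ∀ᵐ x ∂volume.restrict s, |f k x| ≤ M * ‖matToEuclidean (Fk k x)‖) :
    UniformIntegrable f 1 (volume.restrict s) := by
  have := Fact.mk hs.lt_top
  obtain ⟨K, hK⟩ := hF.exists_eLpNorm_le hFk
  refine uniformIntegrable_one_of_eLpNorm_le (p := 2) (C := M.toNNReal * K) (by norm_num)
    (fun k => (hf k).aestronglyMeasurable) fun k => ?_
  rw [ENNReal.coe_mul]
  exact (eLpNorm_le_mul_eLpNorm_of_ae_le_mul (hfF k) 2).trans (mul_le_mul_right (hK k) _)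

lemma WeakL1.const {f : RV n → ℝ} : WeakL1 (fun _ => f) f s :=
  fun _ _ _ => tendsto_const_nhds

lemma WeakL1.add {fk gk : ℕ → RV n → ℝ} {f g : RV n → ℝ} (hf : WeakL1 fk f s)
    (hg : WeakL1 gk g s) (hfk : ∀ k, IntegrableOn (fk k) s) (hgk : ∀ k, IntegrableOn (gk k) s)
    (hf' : IntegrableOn f s) (hg' : IntegrableOn g s) :
    WeakL1 (fun k x => fk k x + gk k x) (fun x => f x + g x) s := by
  intro φ hφ hφM
  have φ_linf : LinfROn φ s := ⟨hφ, hφM⟩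
  have mul_φ : ∀ {u : RV n → ℝ}, IntegrableOn u s → IntegrableOn (fun x => u x * φ x) s :=
    fun hu => by simpa only [mul_comm] using φ_linf.integrableOn_mul hu
  have split : ∀ {u v : RV n → ℝ}, IntegrableOn u s → IntegrableOn v s →
      ∫ x in s, (u x + v x) * φ x = (∫ x in s, u x * φ x) + ∫ x in s, v x * φ x := by
    intro u v hu hv
    simp only [add_mul]
    exact integral_add (mul_φ hu) (mul_φ hv)
  simp only [split hf' hg', split (hfk _) (hgk _)]
  exact (hf φ hφ hφM).add (hg φ hφ hφM)

lemma WeakL1.linf_mul {c : RV n → ℝ} {fk : ℕ → RV n → ℝ} {f : RV n → ℝ} (hc : LinfROn c s)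
    (hf : WeakL1 fk f s) : WeakL1 (fun k x => c x * fk k x) (fun x => c x * f x) s := by
  intro φ hφ hφM
  obtain ⟨hcφ, hcφM⟩ := hc.mul ⟨hφ, hφM⟩
  simpa only [mul_assoc, mul_left_comm] using hf _ hcφ hcφM

lemma WeakL1.sub {fk gk : ℕ → RV n → ℝ} {f g : RV n → ℝ} (hf : WeakL1 fk f s)
    (hg : WeakL1 gk g s) (hfk : ∀ k, IntegrableOn (fk k) s) (hgk : ∀ k, IntegrableOn (gk k) s)
    (hf' : IntegrableOn f s) (hg' : IntegrableOn g s) :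
    WeakL1 (fun k x => fk k x - gk k x) (fun x => f x - g x) s := by
  have neg_one_linf : LinfROn (fun _ => (-1 : ℝ)) s :=
    ⟨measurable_const, 1, Eventually.of_forall fun _ _ => by simp⟩
  simpa only [neg_one_mul, ← sub_eq_add_neg] using
    hf.add (.linf_mul neg_one_linf hg) hfk (fun k => neg_one_linf.integrableOn_mul (hgk k)) hf'
      (neg_one_linf.integrableOn_mul hg')

lemma WeakL2M.weakL1_mdot {Fk : ℕ → MField n} {F H : MField n} (hF : WeakL2M Fk F s)
    (hH : L2MOn H s) : WeakL1 (fun k x => mdot (H x) (Fk k x)) (fun x => mdot (H x) (F x)) s := by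
  intro φ hφ hφM
  have move : ∀ (P Q : Mat n) x, mdot P Q * φ x = mdot Q (φ x • P) := by
    intro P Q x
    rw [mdot_eq_inner, mdot_eq_inner, map_smul, real_inner_smul_right, real_inner_comm, mul_comm]
  simpa only [move] using hF _ (LinfROn.smul_l2MOn ⟨hφ, hφM⟩ hH)

lemma WeakStarLinf.weakL1_mul {fk : ℕ → RV n → ℝ} {f h : RV n → ℝ} (hf : WeakStarLinf fk f s)
    (hh : IntegrableOn h s) : WeakL1 (fun k x => fk k x * h x) (fun x => f x * h x) s := by
  intro φ hφ hφM
  have := hf _ (LinfROn.integrableOn_mul ⟨hφ, hφM⟩ hh)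
  simpa only [mul_assoc, mul_comm (φ _)] using this

lemma WeakL1.tendsto_setIntegral {fk : ℕ → RV n → ℝ} {f : RV n → ℝ} (h : WeakL1 fk f s) :
    Tendsto (fun k => ∫ x in s, fk k x) atTop (𝓝 (∫ x in s, f x)) := by
  simpa only [mul_one] using
    h (fun _ => 1) measurable_const ⟨1, Eventually.of_forall fun _ _ => by simp⟩

lemma integrableOn_of_aecover_of_weakL1 {T : ℕ → Set (RV n)}
    (hT : AECover (volume.restrict s) atTop T) (hTs : ∀ m, T m ⊆ s) {fk : ℕ → RV n → ℝ}
    {f : RV n → ℝ} (hfk : UniformIntegrable fk 1 (volume.restrict s))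
    (hf : ∀ m, IntegrableOn f (T m)) (hw : ∀ m, WeakL1 fk f (T m)) : IntegrableOn f s := by
  have restrict_T := fun m => Measure.restrict_restrict_of_subset (μ := volume) (hTs m)
  refine integrable_of_aecover_of_tendsto_integral_mul (l' := atTop) hT hfk
    (fun m => by simpa only [IntegrableOn, restrict_T] using hf m) fun m φ hφ hφ1 => ?_
  simpa only [restrict_T] using hw m φ hφ ⟨1, Eventually.of_forall fun x _ => hφ1 x⟩

lemma tendsto_setIntegral_of_aecover_of_weakL1 {T : ℕ → Set (RV n)} (hs : volume s ≠ ⊤)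
    (hT : AECover (volume.restrict s) atTop T) (hTs : ∀ m, T m ⊆ s) {fk : ℕ → RV n → ℝ}
    {f : RV n → ℝ} (hfk : UniformIntegrable fk 1 (volume.restrict s)) (hf : IntegrableOn f s)
    (hw : ∀ m, WeakL1 fk f (T m)) :
    Tendsto (fun k => ∫ x in s, fk k x) atTop (𝓝 (∫ x in s, f x)) := by
  have := Fact.mk hs.lt_top
  have restrict_T := fun m => Measure.restrict_restrict_of_subset (μ := volume) (hTs m)
  refine tendsto_integral_of_aecover hT hfk hf fun m => ?_
  simpa only [restrict_T] using (hw m).tendsto_setIntegral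

end WeakConvergence

section Integrand

variable {n : ℕ} {Ω s : Set (RV n)} {a b : RV n → ℝ} {C D : MField n}

lemma Aplus_sub_Aminus (a b : RV n → ℝ) (C D : MField n) (x : RV n) :
    Aplus a b C D x - Aminus a b C D x = a x • C x := by
  simp only [Aplus, Aminus]
  module

lemma Aplus_add_Aminus (a b : RV n → ℝ) (C D : MField n) (x : RV n) :
    Aplus a b C D x + Aminus a b C D x = b x • D x := by
  simp only [Aplus, Aminus]
  module

lemma Goff_eq_mdot_left {t : RV n → ℝ} {F q : MField n} {x : RV n} (hab : b x - a x ≠ 0)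
    (ht : t x = -1) (hq : q x = a x • (F x + C x)) :
    Goff a b C D F q t x = mdot (C x) (q x) := by
  simp only [Goff, hq, ht, mdot_eq_inner, map_add, map_sub, map_smul, inner_add_right,
    inner_sub_left, inner_sub_right, inner_smul_left, inner_smul_right, conj_trivial,
    real_inner_comm (matToEuclidean (C x)) (matToEuclidean (D x))]
  field_simp
  ring

lemma Goff_eq_mdot_right {t : RV n → ℝ} {F q : MField n} {x : RV n} (hab : b x - a x ≠ 0)
    (ht : t x = 1) (hq : q x = b x • (F x + D x)) :
    Goff a b C D F q t x = mdot (D x) (q x) := by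
  simp only [Goff, hq, ht, mdot_eq_inner, map_add, map_sub, map_smul, inner_add_right,
    inner_sub_left, inner_sub_right, inner_smul_left, inner_smul_right, conj_trivial,
    real_inner_comm (matToEuclidean (C x)) (matToEuclidean (D x))]
  field_simp
  ring

lemma measurable_Goff {t : RV n → ℝ} {F q : MField n} (ha : Measurable a) (hb : Measurable b)
    (hC : ∀ i j, Measurable fun x => C x i j) (hD : ∀ i j, Measurable fun x => D x i j)
    (hF : ∀ i j, Measurable fun x => F x i j) (hq : ∀ i j, Measurable fun x => q x i j)
    (ht : Measurable t) : Measurable (Goff a b C D F q t) := by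
  unfold Goff mdot
  simp only [Matrix.sub_apply, Matrix.smul_apply, smul_eq_mul]
  fun_prop

lemma abs_Goff_le_of_phase {χa χb : RV n → ℝ} {F q : MField n} {x : RV n} {M : ℝ}
    (hab : b x - a x ≠ 0) (hC : ‖matToEuclidean (C x)‖ ≤ M) (hD : ‖matToEuclidean (D x)‖ ≤ M)
    (hχa : χa x = 0 ∨ χa x = 1) (hχ : χa x + χb x = 1)
    (hq : q x = (χa x * a x + χb x * b x) • F x + Aplus a b C D x
      + (χb x - χa x) • Aminus a b C D x) :
    |Goff a b C D F q (fun y => χb y - χa y) x| ≤ M * ‖matToEuclidean (q x)‖ := by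
  rcases hχa with χa_eq | χa_eq
  · have χb_eq : χb x = 1 := by linarith
    have q_eq : q x = b x • (F x + D x) := by
      rw [hq, smul_add, ← Aplus_add_Aminus a b C D x, χa_eq, χb_eq]
      module
    rw [Goff_eq_mdot_right hab (by simp [χa_eq, χb_eq]) q_eq]
    exact (abs_mdot_le _ _).trans (by gcongr)
  · have χb_eq : χb x = 0 := by linarith
    have q_eq : q x = a x • (F x + C x) := by
      rw [hq, smul_add, ← Aplus_sub_Aminus a b C D x, χa_eq, χb_eq]
      module
    rw [Goff_eq_mdot_left hab (by simp [χa_eq, χb_eq]) q_eq]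
    exact (abs_mdot_le _ _).trans (by gcongr)

/-- The data `a`, `b`, `C`, `D` are bounded on the set `s` of finite measure and the difference
`b - a` is bounded away from zero there, expressed by `1/(b - a) ∈ L^∞(s)`. On such sets all
coefficients of `Goff` are bounded. -/
structure WellSeparatedOn (a b : RV n → ℝ) (C D : MField n) (s : Set (RV n)) : Prop where
  volume_ne_top : volume s ≠ ⊤
  linf_left : LinfROn a s
  linf_right : LinfROn b s
  linf_inv_sub : LinfROn (fun x => (b x - a x)⁻¹) s
  linf_field_left : LinfMOn C s
  linf_field_right : LinfMOn D s

namespace WellSeparatedOn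

lemma linf_mul_div_sub (h : WellSeparatedOn a b C D s) :
    LinfROn (fun x => a x * b x / (b x - a x)) s := by
  simpa only [div_eq_mul_inv] using (h.linf_left.mul h.linf_right).mul h.linf_inv_sub

lemma l2MOn_left (h : WellSeparatedOn a b C D s) : L2MOn C s :=
  h.linf_field_left.l2MOn h.volume_ne_top

lemma l2MOn_right (h : WellSeparatedOn a b C D s) : L2MOn D s :=
  h.linf_field_right.l2MOn h.volume_ne_top

lemma l2MOn_sub (h : WellSeparatedOn a b C D s) : L2MOn (fun x => C x - D x) s :=
  h.l2MOn_left.sub h.l2MOn_right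

lemma l2MOn_smul_sub_smul (h : WellSeparatedOn a b C D s) :
    L2MOn (fun x => b x • D x - a x • C x) s :=
  (h.linf_right.smul_l2MOn h.l2MOn_right).sub (h.linf_left.smul_l2MOn h.l2MOn_left)

lemma integrableOn_mul_div_two_mul_sub (h : WellSeparatedOn a b C D s) {f : RV n → ℝ}
    (hf : IntegrableOn f s) :
    IntegrableOn (fun x => a x * b x * f x / (2 * (b x - a x))) s := by
  have eq : ∀ x, a x * b x * f x / (2 * (b x - a x)) =
      a x * b x / (b x - a x) * (f x / 2) := fun x => by
    rw [div_mul_div_comm, mul_comm 2]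
  simpa only [eq] using h.linf_mul_div_sub.integrableOn_mul (hf.div_const 2)

lemma integrableOn_Goff_const (h : WellSeparatedOn a b C D s) : IntegrableOn
    (fun x => a x * b x * (mdot (C x) (C x) - mdot (D x) (D x)) / (2 * (b x - a x))) s :=
  h.integrableOn_mul_div_two_mul_sub (h.l2MOn_left.2.sub h.l2MOn_right.2)

lemma integrableOn_Goff_phase (h : WellSeparatedOn a b C D s) : IntegrableOn
    (fun x => a x * b x * mdot (C x - D x) (C x - D x) / (2 * (b x - a x))) s :=
  h.integrableOn_mul_div_two_mul_sub h.l2MOn_sub.2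

lemma integrableOn_Goff_left (h : WellSeparatedOn a b C D s) {F : MField n} (hF : L2MOn F s) :
    IntegrableOn (fun x => a x * b x / (b x - a x) * mdot (C x - D x) (F x)) s :=
  h.linf_mul_div_sub.integrableOn_mul (h.l2MOn_sub.integrableOn_mdot hF)

lemma integrableOn_Goff_right (h : WellSeparatedOn a b C D s) {q : MField n} (hq : L2MOn q s) :
    IntegrableOn (fun x => (b x - a x)⁻¹ * mdot (b x • D x - a x • C x) (q x)) s :=
  h.linf_inv_sub.integrableOn_mul (h.l2MOn_smul_sub_smul.integrableOn_mdot hq)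

lemma integrableOn_Goff_linear (h : WellSeparatedOn a b C D s) {F q : MField n}
    (hF : L2MOn F s) (hq : L2MOn q s) : IntegrableOn (fun x =>
      a x * b x / (b x - a x) * mdot (C x - D x) (F x) +
        (b x - a x)⁻¹ * mdot (b x • D x - a x • C x) (q x)) s :=
  (h.integrableOn_Goff_left hF).add (h.integrableOn_Goff_right hq)

lemma integrableOn_Goff (h : WellSeparatedOn a b C D s) {F q : MField n} {t : RV n → ℝ}
    (hF : L2MOn F s) (hq : L2MOn q s) (ht : LinfROn t s) :
    IntegrableOn (Goff a b C D F q t) s :=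
  ((h.integrableOn_Goff_linear hF hq).add h.integrableOn_Goff_const).sub
    (ht.integrableOn_mul h.integrableOn_Goff_phase)

lemma weakL1_Goff (h : WellSeparatedOn a b C D s) {Fk qk : ℕ → MField n} {tk : ℕ → RV n → ℝ}
    {F q : MField n} {t : RV n → ℝ} (hFk : ∀ k, L2MOn (Fk k) s) (hqk : ∀ k, L2MOn (qk k) s)
    (htk : ∀ k, LinfROn (tk k) s) (hF : L2MOn F s) (hq : L2MOn q s) (ht : LinfROn t s)
    (hFw : WeakL2M Fk F s) (hqw : WeakL2M qk q s) (htw : WeakStarLinf tk t s) :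
    WeakL1 (fun k => Goff a b C D (Fk k) (qk k) (tk k)) (Goff a b C D F q t) s := by
  have const_int := h.integrableOn_Goff_const
  have phase_int := h.integrableOn_Goff_phase
  have linear := ((hFw.weakL1_mdot h.l2MOn_sub).linf_mul h.linf_mul_div_sub).add
    ((hqw.weakL1_mdot h.l2MOn_smul_sub_smul).linf_mul h.linf_inv_sub)
    (fun k => h.integrableOn_Goff_left (hFk k)) (fun k => h.integrableOn_Goff_right (hqk k))
    (h.integrableOn_Goff_left hF) (h.integrableOn_Goff_right hq)
  have affine := linear.add WeakL1.const
    (fun k => h.integrableOn_Goff_linear (hFk k) (hqk k)) (fun _ => const_int)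
    (h.integrableOn_Goff_linear hF hq) const_int
  exact affine.sub (htw.weakL1_mul phase_int)
    (fun k => (h.integrableOn_Goff_linear (hFk k) (hqk k)).add const_int)
    (fun k => (htk k).integrableOn_mul phase_int)
    ((h.integrableOn_Goff_linear hF hq).add const_int) (ht.integrableOn_mul phase_int)

end WellSeparatedOn

/-- The part of `Ω` where `a` and `b` differ by at least `ε`; these sets exhaust `Ω \ Ω₀` as
`ε → 0`. -/
def gapSet (Ω : Set (RV n)) (a b : RV n → ℝ) (ε : ℝ) : Set (RV n) :=
  {x ∈ Ω | ε ≤ |b x - a x|}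

lemma gapSet_subset {ε : ℝ} (hε : 0 < ε) : gapSet Ω a b ε ⊆ Ω \ Omega0 Ω a b := by
  rintro x ⟨hxΩ, hx⟩
  refine ⟨hxΩ, fun hx₀ => hε.not_ge ?_⟩
  simpa [hx₀.2] using hx

lemma measurableSet_gapSet (hΩ : MeasurableSet Ω) (ha : Measurable a) (hb : Measurable b)
    (ε : ℝ) : MeasurableSet (gapSet Ω a b ε) :=
  hΩ.inter (measurableSet_le measurable_const (hb.sub ha).abs)

lemma measurableSet_diff_Omega0 (hΩ : MeasurableSet Ω) (ha : Measurable a) (hb : Measurable b) :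
    MeasurableSet (Ω \ Omega0 Ω a b) :=
  hΩ.diff (hΩ.inter (measurableSet_eq_fun ha hb))

lemma sub_ne_zero_of_mem_diff_Omega0 {x : RV n} (hx : x ∈ Ω \ Omega0 Ω a b) : b x - a x ≠ 0 :=
  fun h => hx.2 ⟨hx.1, (sub_eq_zero.1 h).symm⟩

lemma aecover_gapSet (hΩ : MeasurableSet Ω) (ha : Measurable a) (hb : Measurable b) :
    AECover (volume.restrict (Ω \ Omega0 Ω a b)) atTop
      fun m : ℕ => gapSet Ω a b (1 / ((m : ℝ) + 1)) := by
  refine aecover_restrict_of_ae_imp (measurableSet_diff_Omega0 hΩ ha hb)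
    (Eventually.of_forall fun x hx => ?_) fun m => measurableSet_gapSet hΩ ha hb _
  filter_upwards [tendsto_one_div_add_atTop_nhds_zero_nat.eventually_le_const
    (abs_pos.2 (sub_ne_zero_of_mem_diff_Omega0 hx))] with m hm
  exact ⟨hx.1, hm⟩

lemma wellSeparatedOn_gapSet (hΩ : volume Ω ≠ ⊤) (ha : LinfROn a Ω) (hb : LinfROn b Ω)
    (hC : LinfMOn C Ω) (hD : LinfMOn D Ω) {ε : ℝ} (hε : 0 < ε) :
    WellSeparatedOn a b C D (gapSet Ω a b ε) where
  volume_ne_top := measure_ne_top_of_subset (Set.sep_subset _ _) hΩ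
  linf_left := ha.mono (Set.sep_subset _ _)
  linf_right := hb.mono (Set.sep_subset _ _)
  linf_inv_sub := LinfROn.inv_of_le_abs (hb.1.sub ha.1) hε fun _ hx => hx.2
  linf_field_left := hC.mono (Set.sep_subset _ _)
  linf_field_right := hD.mono (Set.sep_subset _ _)

lemma weakL1_Goff_gapSet (hΩ : MeasurableSet Ω) (hΩv : volume Ω ≠ ⊤) (ha : LinfROn a Ω)
    (hb : LinfROn b Ω) (hC : LinfMOn C Ω) (hD : LinfMOn D Ω) {Fk qk : ℕ → MField n}
    {tk : ℕ → RV n → ℝ} {F q : MField n} {t : RV n → ℝ} (hFk : ∀ k, L2MOn (Fk k) Ω)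
    (hqk : ∀ k, L2MOn (qk k) Ω) (htk : ∀ k, LinfROn (tk k) Ω) (hF : L2MOn F Ω)
    (hq : L2MOn q Ω) (ht : LinfROn t Ω) (hFw : WeakL2M Fk F Ω) (hqw : WeakL2M qk q Ω)
    (htw : WeakStarLinf tk t Ω) {ε : ℝ} (hε : 0 < ε) :
    WeakL1 (fun k => Goff a b C D (Fk k) (qk k) (tk k)) (Goff a b C D F q t)
      (gapSet Ω a b ε) :=
  have sub : gapSet Ω a b ε ⊆ Ω := Set.sep_subset _ _
  have meas := measurableSet_gapSet hΩ ha.1 hb.1 ε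
  (wellSeparatedOn_gapSet hΩv ha hb hC hD hε).weakL1_Goff (fun k => (hFk k).mono sub)
    (fun k => (hqk k).mono sub) (fun k => (htk k).mono sub) (hF.mono sub) (hq.mono sub)
    (ht.mono sub) (hFw.mono sub meas) (hqw.mono sub meas) (htw.mono sub meas)

lemma uniformIntegrable_Goff_of_phases (hΩ : MeasurableSet Ω) (hΩv : volume Ω ≠ ⊤)
    (ha : Measurable a) (hb : Measurable b) (hC : LinfMOn C Ω) (hD : LinfMOn D Ω)
    {χa χb : ℕ → RV n → ℝ} {Fk qk : ℕ → MField n} {q : MField n}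
    (hχam : ∀ k, Measurable (χa k)) (hχbm : ∀ k, Measurable (χb k))
    (hχa : ∀ k x, χa k x = 0 ∨ χa k x = 1) (hχ : ∀ k, ∀ᵐ x, x ∈ Ω → χa k x + χb k x = 1)
    (hFk : ∀ k i j, Measurable fun x => Fk k x i j) (hqk : ∀ k, L2MOn (qk k) Ω)
    (hqw : WeakL2M qk q Ω)
    (hlaw : ∀ k, ∀ᵐ x, x ∈ Ω → qk k x = (χa k x * a x + χb k x * b x) • Fk k x
      + Aplus a b C D x + (χb k x - χa k x) • Aminus a b C D x) :
    UniformIntegrable (fun k => Goff a b C D (Fk k) (qk k) fun y => χb k y - χa k y) 1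
      (volume.restrict (Ω \ Omega0 Ω a b)) := by
  have sub : Ω \ Omega0 Ω a b ⊆ Ω := Set.sdiff_subset
  have meas := measurableSet_diff_Omega0 hΩ ha hb
  obtain ⟨K, hK⟩ := hC.exists_norm_le
  obtain ⟨L, hL⟩ := hD.exists_norm_le
  refine (hqw.mono sub meas).uniformIntegrable_of_ae_abs_le (M := max K L)
    (fun k => (hqk k).mono sub) (measure_ne_top_of_subset sub hΩv)
    (fun k => measurable_Goff ha hb hC.1 hD.1 (hFk k) (hqk k).1 ((hχbm k).sub (hχam k)))
    fun k => ?_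
  rw [ae_restrict_iff' meas]
  filter_upwards [hK, hL, hχ k, hlaw k] with x hCx hDx hχx hqx hx
  exact abs_Goff_le_of_phase (sub_ne_zero_of_mem_diff_Omega0 hx)
    (le_max_of_le_left (hCx hx.1)) (le_max_of_le_right (hDx hx.1)) (hχa k x) (hχx hx.1)
    (hqx hx.1)

lemma linfROn_sub_of_phases {χa χb : RV n → ℝ} (hχam : Measurable χa) (hχbm : Measurable χb)
    (hχa : ∀ x, χa x = 0 ∨ χa x = 1) (hχ : ∀ᵐ x, x ∈ Ω → χa x + χb x = 1) :
    LinfROn (fun x => χb x - χa x) Ω := by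
  refine ⟨hχbm.sub hχam, 1, hχ.mono fun x hx hxΩ => ?_⟩
  rcases hχa x with h | h
  · simp [h, show χb x = 1 by linarith [hx hxΩ]]
  · simp [h, show χb x = 0 by linarith [hx hxΩ]]

end Integrand

theorem statement9_general {n : ℕ} (Ω : Set (RV n)) (hΩm : MeasurableSet Ω)
    (hΩv : volume Ω ≠ ⊤)
    (a b : RV n → ℝ) (ha : LinfROn a Ω) (hb : LinfROn b Ω)
    (C D : MField n) (hC : LinfMOn C Ω) (hD : LinfMOn D Ω)
    (χak χbk : ℕ → RV n → ℝ)
    (hχam : ∀ k, Measurable (χak k)) (hχbm : ∀ k, Measurable (χbk k))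
    (hχav : ∀ k x, χak k x = 0 ∨ χak k x = 1)
    (hχsum : ∀ k, ∀ᵐ x ∂(volume : Measure (RV n)), x ∈ Ω → χak k x + χbk k x = 1)
    (ψ : RV n → ℝ) (hψ : LinfROn ψ Ω)
    (hψw : WeakStarLinf (fun k x => χbk k x - χak k x) ψ Ω)
    (Ek : ℕ → MField n) (E : MField n)
    (hEkL2 : ∀ k, L2MOn (Ek k) Ω) (hEL2 : L2MOn E Ω)
    (hEw : WeakL2M Ek E Ω)
    (pk : ℕ → MField n) (p : MField n)
    (hpkL2 : ∀ k, L2MOn (pk k) Ω) (hpL2 : L2MOn p Ω)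
    (hpw : WeakL2M pk p Ω)
    (hpkdef : ∀ k, ∀ᵐ x ∂(volume : Measure (RV n)), x ∈ Ω →
      pk k x = (χak k x * a x + χbk k x * b x) • Ek k x + Aplus a b C D x
        + (χbk k x - χak k x) • Aminus a b C D x) :
    (∀ k, IntegrableOn
      (Goff a b C D (Ek k) (pk k) (fun y => χbk k y - χak k y))
      (Ω \ Omega0 Ω a b) volume) ∧
    IntegrableOn (Goff a b C D E p ψ) (Ω \ Omega0 Ω a b) volume ∧
    Tendsto (fun k => ∫ x in Ω \ Omega0 Ω a b,
        Goff a b C D (Ek k) (pk k) (fun y => χbk k y - χak k y) x) atTop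
      (𝓝 (∫ x in Ω \ Omega0 Ω a b, Goff a b C D E p ψ x)) := by
  set U := Ω \ Omega0 Ω a b
  set G := Goff a b C D E p ψ
  set Gk := fun k => Goff a b C D (Ek k) (pk k) fun y => χbk k y - χak k y
  set T : ℕ → Set (RV n) := fun m => gapSet Ω a b (1 / ((m : ℝ) + 1))
  have T_sub_U : ∀ m, T m ⊆ U := fun m => gapSet_subset Nat.one_div_pos_of_nat
  have T_sub_Ω : ∀ m, T m ⊆ Ω := fun m => (T_sub_U m).trans Set.sdiff_subset
  have cover : AECover (volume.restrict U) atTop T := aecover_gapSet hΩm ha.1 hb.1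
  have U_fin : volume U ≠ ⊤ := measure_ne_top_of_subset Set.sdiff_subset hΩv
  have unif : UniformIntegrable Gk 1 (volume.restrict U) :=
    uniformIntegrable_Goff_of_phases hΩm hΩv ha.1 hb.1 hC hD hχam hχbm hχav hχsum
      (fun k => (hEkL2 k).1) hpkL2 hpw hpkdef
  have weak : ∀ m, WeakL1 Gk G (T m) := fun m =>
    weakL1_Goff_gapSet hΩm hΩv ha hb hC hD hEkL2 hpkL2
      (fun k => linfROn_sub_of_phases (hχam k) (hχbm k) (hχav k) (hχsum k)) hEL2 hpL2 hψ hEw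
      hpw hψw Nat.one_div_pos_of_nat
  have G_int_T : ∀ m, IntegrableOn G (T m) := fun m =>
    (wellSeparatedOn_gapSet hΩv ha hb hC hD Nat.one_div_pos_of_nat).integrableOn_Goff
      (hEL2.mono (T_sub_Ω m)) (hpL2.mono (T_sub_Ω m)) (hψ.mono (T_sub_Ω m))
  have G_int : IntegrableOn G U := integrableOn_of_aecover_of_weakL1 cover T_sub_U unif G_int_T weak
  exact ⟨fun k => memLp_one_iff_integrable.1 (unif.memLp k), G_int,
    tendsto_setIntegral_of_aecover_of_weakL1 U_fin cover T_sub_U unif G_int weak⟩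

/-- passage to the limit in the integrals over `Ω \ Ω₀`, where the
coefficients contain the possibly unbounded factor `1/(b−a)`. -/
theorem statement9 {n : ℕ} (Ω : Set (RV n)) (hΩo : IsOpen Ω)
    (hΩb : Bornology.IsBounded Ω)
    (δ : ℝ) (hδ : 0 < δ)
    (a b : RV n → ℝ) (ha : LinfROn a Ω) (hb : LinfROn b Ω)
    (haδ : ∀ᵐ x ∂(volume : Measure (RV n)), x ∈ Ω → δ ≤ a x)
    (hbδ : ∀ᵐ x ∂(volume : Measure (RV n)), x ∈ Ω → δ ≤ b x)
    (C D : MField n) (hC : LinfMOn C Ω) (hD : LinfMOn D Ω)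
    (χak χbk : ℕ → RV n → ℝ)
    (hχam : ∀ k, Measurable (χak k)) (hχbm : ∀ k, Measurable (χbk k))
    (hχav : ∀ k x, χak k x = 0 ∨ χak k x = 1)
    (hχbv : ∀ k x, χbk k x = 0 ∨ χbk k x = 1)
    (hχsum : ∀ k, ∀ᵐ x ∂(volume : Measure (RV n)), x ∈ Ω → χak k x + χbk k x = 1)
    (ψ : RV n → ℝ) (hψm : Measurable ψ)
    (hψb : ∀ᵐ x ∂(volume : Measure (RV n)), x ∈ Ω → |ψ x| ≤ 1)
    (hψw : WeakStarLinf (fun k x => χbk k x - χak k x) ψ Ω)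
    (Ek : ℕ → MField n) (E : MField n)
    (hEkL2 : ∀ k, L2MOn (Ek k) Ω) (hEL2 : L2MOn E Ω)
    (hEw : WeakL2M Ek E Ω)
    (pk : ℕ → MField n) (p : MField n)
    (hpkL2 : ∀ k, L2MOn (pk k) Ω) (hpL2 : L2MOn p Ω)
    (hpw : WeakL2M pk p Ω)
    (hpkdef : ∀ k, ∀ᵐ x ∂(volume : Measure (RV n)), x ∈ Ω →
      pk k x = (χak k x * a x + χbk k x * b x) • Ek k x + Aplus a b C D x
        + (χbk k x - χak k x) • Aminus a b C D x) :
    (∀ k, IntegrableOn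
      (Goff a b C D (Ek k) (pk k) (fun y => χbk k y - χak k y))
      (Ω \ Omega0 Ω a b) volume) ∧
    IntegrableOn (Goff a b C D E p ψ) (Ω \ Omega0 Ω a b) volume ∧
    Tendsto (fun k => ∫ x in Ω \ Omega0 Ω a b,
        Goff a b C D (Ek k) (pk k) (fun y => χbk k y - χak k y) x) atTop
      (𝓝 (∫ x in Ω \ Omega0 Ω a b, Goff a b C D E p ψ x)) :=
  statement9_general Ω hΩo.measurableSet hΩb.measure_lt_top.ne a b ha hb C D hC hD χak χbk hχam
    hχbm hχav hχsum ψ ⟨hψm, 1, hψb⟩ hψw Ek E hEkL2 hEL2 hEw pk p hpkL2 hpL2 hpw hpkdef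

end
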